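/- arXiv:1505.06536 — 7 statements merged into one kernel-verified Lean document; each statement's English description precedes it below -/
import Mathlib

section
/- Let m, n ≥ 2. The map sending a pair (t, b) ∈ T_n × V to the m×n matrix a with entries a_{ij} = t_j · b_{ij} is a bijection from T_n × V onto 𝒴^{(0)}. -/
/-!
Rescaling the columns of `b` by `t` multiplies the `j`-th column sum by `t j`. So when the columns
of `b` sum to `1`, the vector `t` is recovered as the column sums of the rescaled matrix, and `b` by
dividing each column by its sum. The rank does not change, since rescaling by nonzero scalars is
right multiplication by an invertible diagonal matrix.
-/

section ScaleCols

variable {ι κ R : Type*}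

/-- Column rescaling: the matrix obtained from `b` by multiplying its `j`-th column by `t j`, on the
left. -/
def scaleCols [Mul R] (t : κ → R) (b : Matrix ι κ R) : Matrix ι κ R :=
  Matrix.of fun i j => t j * b i j

theorem scaleCols_apply [Mul R] (t : κ → R) (b : Matrix ι κ R) (i : ι) (j : κ) :
    scaleCols t b i j = t j * b i j :=
  rfl

theorem scaleCols_apply_ne_zero [MulZeroClass R] [NoZeroDivisors R] {t : κ → R} {b : Matrix ι κ R}
    (ht : ∀ j, t j ≠ 0) (hb : ∀ i j, b i j ≠ 0) (i : ι) (j : κ) : scaleCols t b i j ≠ 0 :=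
  mul_ne_zero (ht j) (hb i j)

theorem scaleCols_eq_mul_diagonal [Fintype κ] [DecidableEq κ] [NonUnitalCommSemiring R]
    (t : κ → R) (b : Matrix ι κ R) : scaleCols t b = b * Matrix.diagonal t := by
  ext i j
  rw [scaleCols_apply, Matrix.mul_diagonal, mul_comm]

theorem rank_scaleCols [Fintype κ] [CommRing R] {t : κ → R} (ht : ∀ j, IsUnit (t j))
    (b : Matrix ι κ R) : (scaleCols t b).rank = b.rank := by
  classical
  have det_isUnit : IsUnit (Matrix.diagonal t).det := by
    rw [Matrix.det_diagonal]
    exact IsUnit.prod_univ_iff.mpr ht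
  rw [scaleCols_eq_mul_diagonal, Matrix.rank_mul_eq_left_of_isUnit_det _ _ det_isUnit]

end ScaleCols

section ColSum

variable {ι κ R : Type*} [Fintype ι]

/-- The vector of column sums of a matrix. -/
def colSum [AddCommMonoid R] (a : Matrix ι κ R) (j : κ) : R :=
  ∑ i, a i j

theorem sum_colSum [Fintype κ] [AddCommMonoid R] (a : Matrix ι κ R) :
    ∑ j, colSum a j = ∑ i, ∑ j, a i j :=
  Finset.sum_comm

theorem colSum_scaleCols [NonUnitalNonAssocSemiring R] (t : κ → R) (b : Matrix ι κ R) (j : κ) :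
    colSum (scaleCols t b) j = t j * colSum b j :=
  (Finset.mul_sum _ _ _).symm

theorem colSum_scaleCols_of_colSum_eq_one [NonAssocSemiring R] (t : κ → R) {b : Matrix ι κ R}
    (hb : ∀ j, colSum b j = 1) : colSum (scaleCols t b) = t := by
  ext j
  rw [colSum_scaleCols, hb, mul_one]

end ColSum

section NormalizeCols

variable {ι κ K : Type*} [Fintype ι] [DivisionSemiring K]

/-- The matrix obtained by dividing every column of `a` by its sum. A column whose sum is `0`
becomes the zero column. -/
def normalizeCols (a : Matrix ι κ K) : Matrix ι κ K :=
  scaleCols (fun j => (colSum a j)⁻¹) a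

theorem colSum_normalizeCols {a : Matrix ι κ K} {j : κ} (ha : colSum a j ≠ 0) :
    colSum (normalizeCols a) j = 1 := by
  rw [normalizeCols, colSum_scaleCols, inv_mul_cancel₀ ha]

theorem scaleCols_colSum_normalizeCols {a : Matrix ι κ K} (ha : ∀ j, colSum a j ≠ 0) :
    scaleCols (colSum a) (normalizeCols a) = a := by
  ext i j
  exact mul_inv_cancel_left₀ (ha j) (a i j)

theorem normalizeCols_scaleCols {t : κ → K} {b : Matrix ι κ K} (ht : ∀ j, t j ≠ 0)
    (hb : ∀ j, colSum b j = 1) : normalizeCols (scaleCols t b) = b := by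
  ext i j
  rw [normalizeCols, colSum_scaleCols_of_colSum_eq_one t hb]
  exact inv_mul_cancel_left₀ (ht j) (b i j)

end NormalizeCols

section Bijection

/-- The vectors with nonzero entries summing to `s`; for `s = 1` this is the paper's `T_n`. -/
def nonzeroVectorsWithSum (κ : Type*) {R : Type*} [Fintype κ] [AddCommMonoid R] (s : R) :
    Set (κ → R) :=
  {t | (∀ j, t j ≠ 0) ∧ ∑ j, t j = s}

/-- The matrices of rank `r` with nonzero entries and all column sums equal to `1`; for `r = 2` this
is the paper's `V`. -/
def colNormalizedMatrices (ι κ R : Type*) [Fintype ι] [Fintype κ] [CommRing R] (r : ℕ) :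
    Set (Matrix ι κ R) :=
  {b | (∀ i j, b i j ≠ 0) ∧ (∀ j, colSum b j = 1) ∧ b.rank = r}

/-- The matrices of rank `r` with nonzero entries, total sum `s` and nonzero column sums; for
`r = 2` and `s = 1` this is the paper's `𝒴⁽⁰⁾`. -/
def nonzeroColSumMatrices (ι κ : Type*) {R : Type*} [Fintype ι] [Fintype κ] [CommRing R] (r : ℕ)
    (s : R) : Set (Matrix ι κ R) :=
  {a | (∀ i j, a i j ≠ 0) ∧ ∑ i, ∑ j, a i j = s ∧ a.rank = r ∧ ∀ j, colSum a j ≠ 0}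

variable {ι κ : Type*} [Fintype ι] [Fintype κ]

theorem colSum_mem_nonzeroVectorsWithSum {R : Type*} [CommRing R] {r : ℕ} {s : R}
    {a : Matrix ι κ R} (ha : a ∈ nonzeroColSumMatrices ι κ r s) :
    colSum a ∈ nonzeroVectorsWithSum κ s :=
  ⟨ha.2.2.2, (sum_colSum a).trans ha.2.1⟩

variable {K : Type*} [Field K]

theorem scaleCols_mem_nonzeroColSumMatrices {r : ℕ} {s : K} {t : κ → K} {b : Matrix ι κ K}
    (ht : t ∈ nonzeroVectorsWithSum κ s) (hb : b ∈ colNormalizedMatrices ι κ K r) :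
    scaleCols t b ∈ nonzeroColSumMatrices ι κ r s := by
  obtain ⟨t_ne_zero, sum_t⟩ := ht
  obtain ⟨b_ne_zero, colSum_b, rank_b⟩ := hb
  have colSum_eq : colSum (scaleCols t b) = t := colSum_scaleCols_of_colSum_eq_one t colSum_b
  refine ⟨scaleCols_apply_ne_zero t_ne_zero b_ne_zero, ?_, ?_, ?_⟩
  · rw [← sum_colSum, colSum_eq, sum_t]
  · rw [rank_scaleCols fun j => (t_ne_zero j).isUnit, rank_b]
  · rwa [colSum_eq]

theorem normalizeCols_mem_colNormalizedMatrices {r : ℕ} {s : K} {a : Matrix ι κ K}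
    (ha : a ∈ nonzeroColSumMatrices ι κ r s) :
    normalizeCols a ∈ colNormalizedMatrices ι κ K r := by
  obtain ⟨a_ne_zero, -, rank_a, colSum_ne_zero⟩ := ha
  have inv_colSum_ne_zero (j : κ) : (colSum a j)⁻¹ ≠ 0 := inv_ne_zero (colSum_ne_zero j)
  exact ⟨scaleCols_apply_ne_zero inv_colSum_ne_zero a_ne_zero,
    fun j => colSum_normalizeCols (colSum_ne_zero j),
    (rank_scaleCols (fun j => (inv_colSum_ne_zero j).isUnit) a).trans rank_a⟩

theorem column_rescaling_bijection_general (r : ℕ) (s : K) :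
    Set.BijOn (fun p : (κ → K) × Matrix ι κ K => scaleCols p.1 p.2)
      (nonzeroVectorsWithSum κ s ×ˢ colNormalizedMatrices ι κ K r)
      (nonzeroColSumMatrices ι κ r s) := by
  refine Set.InvOn.bijOn (f' := fun a => (colSum a, normalizeCols a)) ⟨?leftInv, ?rightInv⟩
    (fun p hp => scaleCols_mem_nonzeroColSumMatrices hp.1 hp.2)
    (fun a ha => ⟨colSum_mem_nonzeroVectorsWithSum ha, normalizeCols_mem_colNormalizedMatrices ha⟩)
  case leftInv =>
    rintro ⟨t, b⟩ ⟨⟨t_ne_zero, -⟩, -, colSum_b, -⟩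
    exact Prod.ext (colSum_scaleCols_of_colSum_eq_one t colSum_b)
      (normalizeCols_scaleCols t_ne_zero colSum_b)
  case rightInv => exact fun a ha => scaleCols_colSum_normalizeCols ha.2.2.2

end Bijection

/-- Column rescaling gives a bijection `T_n × V ≃ 𝒴⁽⁰⁾`, where `T_n` is the set of
`n`-tuples of nonzero complex numbers summing to `1`, `V` is the set of `m × n` rank-2
matrices with nonzero entries and all column sums equal to `1`, and `𝒴⁽⁰⁾` is the set of
`m × n` rank-2 matrices with nonzero entries, total entry sum `1`, and all column sums
nonzero. -/
theorem column_rescaling_bijection (m n : ℕ) (hm : 2 ≤ m) (hn : 2 ≤ n)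
    (T : Set (Fin n → ℂ))
    (hT : T = {t : Fin n → ℂ | (∀ j, t j ≠ 0) ∧ ∑ j, t j = 1})
    (V : Set (Matrix (Fin m) (Fin n) ℂ))
    (hV : V = {b : Matrix (Fin m) (Fin n) ℂ | (∀ i j, b i j ≠ 0) ∧
      (∀ j, ∑ i, b i j = 1) ∧ b.rank = 2})
    (Y0 : Set (Matrix (Fin m) (Fin n) ℂ))
    (hY0 : Y0 = {a : Matrix (Fin m) (Fin n) ℂ | (∀ i j, a i j ≠ 0) ∧
      (∑ i, ∑ j, a i j) = 1 ∧ a.rank = 2 ∧ ∀ j, ∑ i, a i j ≠ 0}) :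
    Set.BijOn
      (fun p : (Fin n → ℂ) × Matrix (Fin m) (Fin n) ℂ =>
        Matrix.of fun i j => p.1 j * p.2 i j)
      (T ×ˢ V) Y0 := by
  subst hT hV hY0
  exact column_rescaling_bijection_general 2 1
end

section
/- Let m, n ≥ 2. For a ∈ 𝒴 and t ∈ ℂ with t ≠ 0, let t·a be the m×n matrix whose (i,j)-entry is a_{ij} if the j-th column sum of a is nonzero, and t·a_{ij} if the j-th column sum of a is zero. Then: (i) t·a ∈ 𝒴; (ii) for each j, the j-th column sum of t·a is zero if and only if the j-th column sum of a is zero, so each 𝒴^{(l)} is preserved; (iii) this defines a group action of the multiplicative group ℂ∖{0} on 𝒴, i.e., 1·a = a and s·(t·a) = (st)·a; and (iv) if a has at least one column whose entries sum to zero and t·a = a, then t = 1. -/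
/-!
Multiplying a zero-sum column by a scalar leaves its sum zero, and the other columns are untouched,
so the rescaling preserves every column sum. Hence it preserves the sum of all entries, and the set
of columns being rescaled does not change, which makes successive rescalings compose. It is also
right multiplication by a diagonal matrix, invertible when the scalar is, so the rank is preserved.
-/

section ColumnScaling

variable {ι κ R M : Type*} [Fintype ι] [DecidableEq M]

section DistribMulAction

variable [Monoid R] [AddCommMonoid M] [DistribMulAction R M]

/-- The torus action `t · a` on matrices, for entries in any additive monoid on which the scalars
act: the columns of `a` with sum zero are multiplied by `t`, the others are kept. -/
def scaleZeroSumColumns (t : R) (a : Matrix ι κ M) : Matrix ι κ M :=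
  Matrix.of fun i j => if ∑ i', a i' j = 0 then t • a i j else a i j

theorem scaleZeroSumColumns_apply (t : R) (a : Matrix ι κ M) (i : ι) (j : κ) :
    scaleZeroSumColumns t a i j = if ∑ i', a i' j = 0 then t • a i j else a i j :=
  rfl

theorem sum_column_scaleZeroSumColumns (t : R) (a : Matrix ι κ M) (j : κ) :
    ∑ i, scaleZeroSumColumns t a i j = ∑ i, a i j := by
  by_cases hj : ∑ i, a i j = 0
  · simp only [scaleZeroSumColumns_apply, if_pos hj]
    rw [← Finset.smul_sum, hj, smul_zero]
  · simp only [scaleZeroSumColumns_apply, if_neg hj]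

theorem sum_sum_scaleZeroSumColumns [Fintype κ] (t : R) (a : Matrix ι κ M) :
    ∑ i, ∑ j, scaleZeroSumColumns t a i j = ∑ i, ∑ j, a i j :=
  calc
    ∑ i, ∑ j, scaleZeroSumColumns t a i j = ∑ j, ∑ i, scaleZeroSumColumns t a i j :=
      Finset.sum_comm
    _ = ∑ j, ∑ i, a i j :=
      Finset.sum_congr rfl fun j _ => sum_column_scaleZeroSumColumns t a j
    _ = ∑ i, ∑ j, a i j := Finset.sum_comm

theorem one_scaleZeroSumColumns (a : Matrix ι κ M) : scaleZeroSumColumns (1 : R) a = a := by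
  ext i j
  rw [scaleZeroSumColumns_apply, one_smul, ite_self]

theorem scaleZeroSumColumns_scaleZeroSumColumns (s t : R) (a : Matrix ι κ M) :
    scaleZeroSumColumns s (scaleZeroSumColumns t a) = scaleZeroSumColumns (s * t) a := by
  ext i j
  rw [scaleZeroSumColumns_apply s, sum_column_scaleZeroSumColumns]
  by_cases hj : ∑ i, a i j = 0
  · simp only [scaleZeroSumColumns_apply, if_pos hj, mul_smul]
  · simp only [scaleZeroSumColumns_apply, if_neg hj]

theorem scaleZeroSumColumns_apply_eq_zero_iff {t : R} (ht : IsUnit t) {a : Matrix ι κ M}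
    {i : ι} {j : κ} : scaleZeroSumColumns t a i j = 0 ↔ a i j = 0 := by
  rw [scaleZeroSumColumns_apply]
  split_ifs
  · exact ht.smul_eq_zero
  · rfl

end DistribMulAction

theorem eq_one_of_scaleZeroSumColumns_eq_self [Ring R] [IsDomain R] [AddCommGroup M] [Module R M]
    [Module.IsTorsionFree R M] {t : R} {a : Matrix ι κ M} {i : ι} {j : κ}
    (hj : ∑ i, a i j = 0) (hij : a i j ≠ 0) (hfix : scaleZeroSumColumns t a = a) : t = 1 := by
  have hentry : t • a i j = a i j := by
    simpa only [scaleZeroSumColumns_apply, if_pos hj] using congrFun₂ hfix i j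
  exact smul_left_injective R hij (hentry.trans (one_smul R _).symm)

end ColumnScaling

section Rank

variable {ι κ R : Type*} [Fintype ι] [Fintype κ] [CommRing R] [DecidableEq R]

theorem scaleZeroSumColumns_eq_mul_diagonal [DecidableEq κ] (t : R) (a : Matrix ι κ R) :
    scaleZeroSumColumns t a =
      a * Matrix.diagonal fun j => if ∑ i, a i j = 0 then t else 1 := by
  ext i j
  rw [scaleZeroSumColumns_apply, Matrix.mul_diagonal, mul_ite, mul_one, smul_eq_mul, mul_comm]

theorem rank_scaleZeroSumColumns {t : R} (ht : IsUnit t) (a : Matrix ι κ R) :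
    (scaleZeroSumColumns t a).rank = a.rank := by
  classical
  rw [scaleZeroSumColumns_eq_mul_diagonal]
  apply Matrix.rank_mul_eq_left_of_isUnit_det
  rw [Matrix.det_diagonal, IsUnit.prod_univ_iff]
  intro j
  split_ifs
  · exact ht
  · exact isUnit_one

/-- Matrices with nonzero entries, total sum `c` and rank `r`. The set `𝒴` is the case `c = 1`,
`r = 2` over `ℂ`. -/
def nonvanishingMatrices (ι κ : Type*) {R : Type*} [Fintype ι] [Fintype κ] [CommRing R]
    (c : R) (r : ℕ) : Set (Matrix ι κ R) :=
  {a | (∀ i j, a i j ≠ 0) ∧ ∑ i, ∑ j, a i j = c ∧ a.rank = r}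

theorem scaleZeroSumColumns_mem_nonvanishingMatrices {c t : R} {r : ℕ} {a : Matrix ι κ R}
    (ha : a ∈ nonvanishingMatrices ι κ c r) (ht : IsUnit t) :
    scaleZeroSumColumns t a ∈ nonvanishingMatrices ι κ c r := by
  obtain ⟨hne, hsum, hrank⟩ := ha
  exact ⟨fun i j => (scaleZeroSumColumns_apply_eq_zero_iff ht).not.mpr (hne i j),
    (sum_sum_scaleZeroSumColumns t a).trans hsum, (rank_scaleZeroSumColumns ht a).trans hrank⟩

theorem torus_action_on_Y_general [IsDomain R] [Nonempty ι] {c : R} {r : ℕ} {a : Matrix ι κ R}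
    (ha : a ∈ nonvanishingMatrices ι κ c r) {t : R} (ht : IsUnit t) :
    scaleZeroSumColumns t a ∈ nonvanishingMatrices ι κ c r ∧
      (∀ j, ∑ i, scaleZeroSumColumns t a i j = 0 ↔ ∑ i, a i j = 0) ∧
      (∀ l : ℕ, {j | ∑ i, scaleZeroSumColumns t a i j = 0}.ncard = l ↔
        {j | ∑ i, a i j = 0}.ncard = l) ∧
      scaleZeroSumColumns (1 : R) a = a ∧
      (∀ s : R, scaleZeroSumColumns s (scaleZeroSumColumns t a) = scaleZeroSumColumns (s * t) a) ∧
      ((∃ j, ∑ i, a i j = 0) → scaleZeroSumColumns t a = a → t = 1) := by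
  refine ⟨scaleZeroSumColumns_mem_nonvanishingMatrices ha ht, fun j => ?_, fun l => ?_,
    one_scaleZeroSumColumns a, fun s => scaleZeroSumColumns_scaleZeroSumColumns s t a, ?_⟩
  · rw [sum_column_scaleZeroSumColumns]
  · simp only [sum_column_scaleZeroSumColumns]
  · rintro ⟨j, hj⟩ hfix
    obtain ⟨i⟩ := ‹Nonempty ι›
    exact eq_one_of_scaleZeroSumColumns_eq_self hj (ha.1 i j) hfix

end Rank

/-- The `ℂ*`-action on `𝒴` that rescales exactly the columns with zero column sum:
it preserves `𝒴`, preserves the zero-column-sum pattern (hence each stratum `𝒴⁽ˡ⁾`),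
is a genuine group action, and acts freely on matrices having at least one column with
zero sum. -/
theorem torus_action_on_Y (m n : ℕ) (hm : 2 ≤ m) (hn : 2 ≤ n)
    (Y : Set (Matrix (Fin m) (Fin n) ℂ))
    (hY : Y = {a : Matrix (Fin m) (Fin n) ℂ | (∀ i j, a i j ≠ 0) ∧
      (∑ i, ∑ j, a i j) = 1 ∧ a.rank = 2})
    (smul : ℂ → Matrix (Fin m) (Fin n) ℂ → Matrix (Fin m) (Fin n) ℂ)
    (hsmul : ∀ t a, smul t a =
      Matrix.of fun i j => if (∑ i', a i' j) = 0 then t * a i j else a i j) :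
    ∀ a ∈ Y, ∀ t : ℂ, t ≠ 0 →
      (smul t a ∈ Y) ∧
      (∀ j, (∑ i, (smul t a) i j = 0) ↔ (∑ i, a i j = 0)) ∧
      (∀ l : ℕ, {j | ∑ i, (smul t a) i j = 0}.ncard = l ↔ {j | ∑ i, a i j = 0}.ncard = l) ∧
      (smul 1 a = a) ∧
      (∀ s : ℂ, s ≠ 0 → smul s (smul t a) = smul (s * t) a) ∧
      ((∃ j, ∑ i, a i j = 0) → smul t a = a → t = 1) := by
  obtain rfl : smul = scaleZeroSumColumns := funext₂ hsmul
  obtain rfl : Y = nonvanishingMatrices (Fin m) (Fin n) 1 2 := hY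
  have : Nonempty (Fin m) := ⟨⟨0, by omega⟩⟩
  intro a ha t ht
  obtain ⟨hmem, hzero, hcard, hone, hmul, hfree⟩ := torus_action_on_Y_general ha ht.isUnit
  exact ⟨hmem, hzero, hcard, hone, fun s _ => hmul s, hfree⟩
end

section
/- Let m ≥ 2 and l ≥ 3. The map sending a tuple (A₁, …, A_{l−2}) of matrices in W₃ that all have the same first two columns b₁, b₂ to the m×l matrix whose first two columns are b₁, b₂ and whose (k+2)-nd column is the third column of A_k (for 1 ≤ k ≤ l−2) is a bijection from {(A₁, …, A_{l−2}) ∈ (W₃)^{l−2} : the first two columns of A₁, …, A_{l−2} all coincide} onto W_l. In other words, W_l is the (l−2)-fold fiber product of W₃ over W₂ with respect to the projections forgetting the third column. -/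
/-!
Once the first two columns of a matrix are linearly independent, having rank two means that every
column lies in their span. This is a condition on one column at a time, so a matrix with `l ≥ 3`
columns belongs to `W_l` exactly when each of its submatrices with columns `0`, `1` and `k + 2`
belongs to `W₃`, and a matrix is recovered from these submatrices by gluing.
-/

open Submodule

section Gluing

variable {ι α : Type*} {l : ℕ}

/-- The positions `0`, `1` and `k + 2` of the columns selected by `columnTriple`. -/
def tripleIndex (hl : 3 ≤ l) (k : Fin (l - 2)) : Fin 3 → Fin l :=
  ![⟨0, by omega⟩, ⟨1, by omega⟩, ⟨k + 2, by omega⟩]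

theorem forall_iff_forall_tripleIndex (hl : 3 ≤ l) {p : Fin l → Prop} :
    (∀ j, p j) ↔ ∀ k t, p (tripleIndex hl k t) := by
  refine ⟨fun h k t => h _, fun h j => ?_⟩
  obtain ⟨k, t, rfl⟩ : ∃ k t, tripleIndex hl k t = j := by
    obtain ⟨_ | _ | k, hk⟩ := j
    · exact ⟨⟨0, by omega⟩, 0, rfl⟩
    · exact ⟨⟨0, by omega⟩, 1, rfl⟩
    · exact ⟨⟨k, by omega⟩, 2, rfl⟩
  exact h k t

/-- The submatrix of `c` formed by the columns `0`, `1` and `k + 2`; as `k` varies, this is the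
inverse of gluing. -/
def columnTriple (hl : 3 ≤ l) (c : Matrix ι (Fin l) α) (k : Fin (l - 2)) : Matrix ι (Fin 3) α :=
  c.submatrix id (tripleIndex hl k)

/-- The matrix whose first two columns are those of `A 0` and whose column `k + 2` is the third
column of `A k`. -/
def glueColumns (hl : 3 ≤ l) (A : Fin (l - 2) → Matrix ι (Fin 3) α) : Matrix ι (Fin l) α :=
  Matrix.of fun i j =>
    if _ : j.val = 0 then A ⟨0, by omega⟩ i 0
    else if _ : j.val = 1 then A ⟨0, by omega⟩ i 1
    else A ⟨j.val - 2, by omega⟩ i 2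

theorem glueColumns_columnTriple (hl : 3 ≤ l) (c : Matrix ι (Fin l) α) :
    glueColumns hl (columnTriple hl c) = c := by
  ext i ⟨_ | _ | k, hk⟩ <;> rfl

theorem columnTriple_glueColumns (hl : 3 ≤ l) {A : Fin (l - 2) → Matrix ι (Fin 3) α}
    (hA : ∀ k k' i, A k i 0 = A k' i 0 ∧ A k i 1 = A k' i 1) :
    columnTriple hl (glueColumns hl A) = A := by
  ext k i t
  fin_cases t
  · exact (hA _ k i).1
  · exact (hA _ k i).2
  · rfl

end Gluing

section RankTwo

variable {ι K : Type*} [Field K] {l : ℕ}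

theorem rank_eq_card_iff_forall_col_mem_span {n κ : Type*} [Fintype n] [Fintype κ]
    {c : Matrix ι n K} {v : κ → ι → K} (hv : LinearIndependent K v)
    (hvc : Set.range v ⊆ Set.range c.col) :
    c.rank = Fintype.card κ ↔ ∀ j, c.col j ∈ span K (Set.range v) := by
  have := FiniteDimensional.span_of_finite K (Set.finite_range c.col)
  have span_le : span K (Set.range v) ≤ span K (Set.range c.col) := span_mono hvc
  have cols_le_iff : span K (Set.range c.col) ≤ span K (Set.range v) ↔
      ∀ j, c.col j ∈ span K (Set.range v) := by
    rw [Submodule.span_le, Set.range_subset_iff]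
    rfl
  rw [Matrix.rank_eq_finrank_span_cols, ← finrank_span_eq_card hv, ← cols_le_iff]
  constructor
  · intro finrank_eq
    exact (eq_of_le_of_finrank_eq span_le finrank_eq.symm).ge
  · intro cols_le
    rw [cols_le.antisymm span_le]

/-- The matrices with `l` columns, all satisfying `P`, that have rank two and linearly independent
first two columns. The set `W_l` is the case where `P v` says that `v` has nonzero entries and
entry sum one. -/
def rankTwoLocus (P : (ι → K) → Prop) (hl : 2 ≤ l) : Set (Matrix ι (Fin l) K) :=
  {c | (∀ j, P (c.col j)) ∧ c.rank = 2 ∧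
    LinearIndependent K ![c.col ⟨0, by omega⟩, c.col ⟨1, by omega⟩]}

theorem rankTwoLocus_ne_zero_and_sum_eq_one [Fintype ι] (hl : 2 ≤ l) :
    rankTwoLocus (fun v : ι → K => (∀ i, v i ≠ 0) ∧ ∑ i, v i = 1) hl =
      {c : Matrix ι (Fin l) K | (∀ i k, c i k ≠ 0) ∧ (∀ k, ∑ i, c i k = 1) ∧ c.rank = 2 ∧
        LinearIndependent K ![fun i => c i ⟨0, by omega⟩, fun i => c i ⟨1, by omega⟩]} := by
  ext c
  simp only [rankTwoLocus, Set.mem_ofPred_eq, forall_and, and_assoc]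
  exact and_congr_left' forall_comm

theorem mem_rankTwoLocus_iff_forall_col {P : (ι → K) → Prop} (hl : 2 ≤ l)
    {c : Matrix ι (Fin l) K} :
    c ∈ rankTwoLocus P hl ↔
      LinearIndependent K ![c.col ⟨0, by omega⟩, c.col ⟨1, by omega⟩] ∧
        ∀ j, P (c.col j) ∧
          c.col j ∈ span K (Set.range ![c.col ⟨0, by omega⟩, c.col ⟨1, by omega⟩]) := by
  rw [rankTwoLocus, Set.mem_ofPred_eq, ← and_assoc, and_comm, forall_and]
  refine and_congr_right fun hc => and_congr_right' ?_
  exact rank_eq_card_iff_forall_col_mem_span hc (by simp [Set.insert_subset_iff])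

theorem mem_rankTwoLocus_iff_forall_columnTriple_mem {P : (ι → K) → Prop} (hl : 3 ≤ l)
    {c : Matrix ι (Fin l) K} :
    c ∈ rankTwoLocus P (Nat.le_of_succ_le hl) ↔
      ∀ k, columnTriple hl c k ∈ rankTwoLocus P (Nat.le_succ 2) := by
  have : Nonempty (Fin (l - 2)) := ⟨⟨0, by omega⟩⟩
  simp only [mem_rankTwoLocus_iff_forall_col]
  rw [forall_iff_forall_tripleIndex hl, forall_and]
  exact and_congr_left' (forall_const _).symm

theorem W_l_fiber_product_general (P : (ι → K) → Prop) (hl : 3 ≤ l) :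
    Set.BijOn (glueColumns hl)
      {A : Fin (l - 2) → Matrix ι (Fin 3) K |
        (∀ k, A k ∈ rankTwoLocus P (Nat.le_succ 2)) ∧
        ∀ k k' : Fin (l - 2), ∀ i, A k i 0 = A k' i 0 ∧ A k i 1 = A k' i 1}
      (rankTwoLocus P (Nat.le_of_succ_le hl)) := by
  refine Set.InvOn.bijOn (f' := columnTriple hl)
    ⟨fun A hA => columnTriple_glueColumns hl hA.2, fun c _ => glueColumns_columnTriple hl c⟩ ?_ ?_
  · rintro A ⟨hAmem, hAeq⟩
    rwa [mem_rankTwoLocus_iff_forall_columnTriple_mem hl, columnTriple_glueColumns hl hAeq]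
  · intro c hc
    exact ⟨(mem_rankTwoLocus_iff_forall_columnTriple_mem hl).1 hc, fun _ _ _ => ⟨rfl, rfl⟩⟩

end RankTwo

/-- `W_l` is the `(l-2)`-fold fiber product of `W₃` over `W₂`: gluing the third columns
of `l - 2` matrices in `W₃` sharing the same first two columns is a bijection onto
`W_l`.  Here `W_l` is the set of `m × l` matrices with nonzero entries, all column sums
`1`, rank `2`, and linearly independent first two columns. -/
theorem W_l_fiber_product (m l : ℕ) (hm : 2 ≤ m) (hl : 3 ≤ l)
    (W3 : Set (Matrix (Fin m) (Fin 3) ℂ))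
    (hW3 : W3 = {c : Matrix (Fin m) (Fin 3) ℂ | (∀ i k, c i k ≠ 0) ∧
      (∀ k, ∑ i, c i k = 1) ∧ c.rank = 2 ∧
      LinearIndependent ℂ ![fun i => c i 0, fun i => c i 1]})
    (Wl : Set (Matrix (Fin m) (Fin l) ℂ))
    (hWl : Wl = {c : Matrix (Fin m) (Fin l) ℂ | (∀ i k, c i k ≠ 0) ∧
      (∀ k, ∑ i, c i k = 1) ∧ c.rank = 2 ∧
      LinearIndependent ℂ ![fun i => c i ⟨0, by omega⟩, fun i => c i ⟨1, by omega⟩]}) :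
    Set.BijOn
      (fun A : Fin (l - 2) → Matrix (Fin m) (Fin 3) ℂ =>
        Matrix.of fun i (j : Fin l) =>
          if h0 : j.val = 0 then A ⟨0, by omega⟩ i 0
          else if h1 : j.val = 1 then A ⟨0, by omega⟩ i 1
          else A ⟨j.val - 2, by have := j.isLt; omega⟩ i 2)
      {A : Fin (l - 2) → Matrix (Fin m) (Fin 3) ℂ |
        (∀ k, A k ∈ W3) ∧
        ∀ k k' : Fin (l - 2), ∀ i, A k i 0 = A k' i 0 ∧ A k i 1 = A k' i 1}
      Wl := by
  obtain rfl := hW3.trans (rankTwoLocus_ne_zero_and_sum_eq_one (K := ℂ) (Nat.le_succ 2)).symm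
  obtain rfl := hWl.trans (rankTwoLocus_ne_zero_and_sum_eq_one (K := ℂ) (by omega)).symm
  exact W_l_fiber_product_general _ hl
end

section
/- Let m ≥ 2 and let b₁, b₂ ∈ ℂ^m be vectors all of whose entries are nonzero and whose entry sums both equal 1, with b₁ ≠ b₂. Suppose there exists c ∈ ℂ such that b₁ᵢ = c·b₂ᵢ for every index i with b₁ᵢ ≠ b₂ᵢ. Then Σ_{i : b₁ᵢ ≠ b₂ᵢ} b₁ᵢ = 0 and Σ_{i : b₁ᵢ ≠ b₂ᵢ} b₂ᵢ = 0. -/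
/-!
Cancelling the indices where the two families agree shows that their sums over the remaining
indices coincide, while proportionality makes the first of these sums `c` times the second. So the
common value `S` satisfies `c • S = S`: either `S = 0`, or `c = 1`, in which case no index differs.
-/

section

variable {ι R M : Type*} {s : Finset ι} {f g : ι → M} [DecidablePred fun i => f i ≠ g i]

theorem sum_filter_ne_eq_sum_filter_ne_iff [AddCommMonoid M] [IsRightCancelAdd M] :
    ∑ i ∈ s with f i ≠ g i, f i = ∑ i ∈ s with f i ≠ g i, g i ↔
      ∑ i ∈ s, f i = ∑ i ∈ s, g i := by
  have sum_agreeing : ∑ i ∈ s with ¬f i ≠ g i, f i = ∑ i ∈ s with ¬f i ≠ g i, g i :=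
    Finset.sum_congr rfl fun i hi => not_not.mp (Finset.mem_filter.mp hi).2
  rw [← Finset.sum_filter_add_sum_filter_not s (fun i => f i ≠ g i) f,
    ← Finset.sum_filter_add_sum_filter_not s (fun i => f i ≠ g i) g, sum_agreeing,
    add_left_inj]

theorem sum_filter_ne_eq_smul_sum_filter_ne [AddCommMonoid M] [DistribSMul R M] {c : R}
    (hc : ∀ i ∈ s, f i ≠ g i → f i = c • g i) :
    ∑ i ∈ s with f i ≠ g i, f i = c • ∑ i ∈ s with f i ≠ g i, g i := by
  rw [Finset.smul_sum]
  refine Finset.sum_congr rfl fun i hi => ?_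
  obtain ⟨his, hne⟩ := Finset.mem_filter.mp hi
  exact hc i his hne

theorem sum_over_differing_indices_eq_zero_general [Ring R] [IsCancelMulZero R]
    [AddCommGroup M] [Module R M] [Module.IsTorsionFree R M]
    (hsum : ∑ i ∈ s, f i = ∑ i ∈ s, g i)
    (hc : ∃ c : R, ∀ i ∈ s, f i ≠ g i → f i = c • g i) :
    ∑ i ∈ s with f i ≠ g i, f i = 0 ∧ ∑ i ∈ s with f i ≠ g i, g i = 0 := by
  obtain ⟨c, hc⟩ := hc
  have sums_eq : ∑ i ∈ s with f i ≠ g i, f i = ∑ i ∈ s with f i ≠ g i, g i :=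
    sum_filter_ne_eq_sum_filter_ne_iff.mpr hsum
  suffices sum_right : ∑ i ∈ s with f i ≠ g i, g i = 0 from ⟨sums_eq.trans sum_right, sum_right⟩
  by_contra sum_ne_zero
  have smul_sum : c • ∑ i ∈ s with f i ≠ g i, g i = (1 : R) • ∑ i ∈ s with f i ≠ g i, g i := by
    rw [← sum_filter_ne_eq_smul_sum_filter_ne hc, sums_eq, one_smul]
  obtain rfl : c = 1 := smul_left_injective R sum_ne_zero smul_sum
  have no_differing : ∀ i ∈ s, ¬f i ≠ g i := fun i hi hne =>
    hne ((hc i hi hne).trans (one_smul R (g i)))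
  exact sum_ne_zero (by rw [Finset.filter_false_of_mem no_differing, Finset.sum_empty])

end

open scoped Classical in
/-- If the entries of `b₁` are proportional (with a single factor `c`) to those of `b₂`
at every index where they differ, then the entries of `b₁` (resp. `b₂`) over the indices
where the vectors differ sum to `0`. -/
theorem sum_over_differing_indices_eq_zero (m : ℕ) (hm : 2 ≤ m) (b₁ b₂ : Fin m → ℂ)
    (hb₁0 : ∀ i, b₁ i ≠ 0) (hb₂0 : ∀ i, b₂ i ≠ 0)
    (hb₁s : ∑ i, b₁ i = 1) (hb₂s : ∑ i, b₂ i = 1)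
    (hne : b₁ ≠ b₂)
    (hc : ∃ c : ℂ, ∀ i, b₁ i ≠ b₂ i → b₁ i = c * b₂ i) :
    (∑ i ∈ Finset.univ.filter fun i => b₁ i ≠ b₂ i, b₁ i) = 0 ∧
    (∑ i ∈ Finset.univ.filter fun i => b₁ i ≠ b₂ i, b₂ i) = 0 :=
  sum_over_differing_indices_eq_zero_general (hb₁s.trans hb₂s.symm)
    (hc.imp fun _ hc i _ => hc i)
end

section
/- Let m ≥ 2 and let W₂^{(0)} denote the set of pairs (b₁, b₂) of vectors in ℂ^m all of whose entries are nonzero, whose entry sums both equal 1, which are linearly independent over ℂ, and for which there exists c ∈ ℂ with b₁ᵢ = c·b₂ᵢ for every index i with b₁ᵢ ≠ b₂ᵢ. For t ∈ ℂ with t ≠ 0, define t·(b₁, b₂) to be the pair (b₁′, b₂′) where b₁′ᵢ = b₁ᵢ and b₂′ᵢ = b₂ᵢ if b₁ᵢ = b₂ᵢ, and b₁′ᵢ = t·b₁ᵢ and b₂′ᵢ = t·b₂ᵢ otherwise. Then t·(b₁, b₂) ∈ W₂^{(0)}, and if t·(b₁, b₂) = (b₁, b₂) then t = 1. -/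
/-!
Put `D = {i | b₁ i ≠ b₂ i}`. The entries outside `D` contribute equally to the two entry sums, which
agree, so `∑ i ∈ D, b₁ i = ∑ i ∈ D, b₂ i`. On `D` we have `b₁ = c b₂` with `c ≠ 1`, which forces
both sums over `D` to vanish. Hence multiplying the entries in `D` by `t` leaves the entry sums
unchanged. For `t ≠ 0` this rescaling is an injective diagonal map, so it preserves linear
independence, and since `D` is nonempty, the scalar `t` can be read off the rescaled pair.
-/

section Sums

variable {ι M R : Type*} [Fintype ι]

theorem sum_filter_ne_congr [AddCancelCommMonoid M] [DecidableEq M] {a b : ι → M}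
    (hsum : ∑ i, a i = ∑ i, b i) :
    ∑ i with a i ≠ b i, a i = ∑ i with a i ≠ b i, b i := by
  have hagree : ∑ i with a i = b i, a i = ∑ i with a i = b i, b i :=
    Finset.sum_congr rfl fun i hi => (Finset.mem_filter.mp hi).2
  rw [← Finset.sum_filter_add_sum_filter_not _ (fun i => a i = b i) a,
    ← Finset.sum_filter_add_sum_filter_not _ (fun i => a i = b i) b, hagree] at hsum
  exact add_left_cancel hsum

theorem sum_filter_ne_eq_zero_of_proportional [Ring R] [NoZeroDivisors R] [DecidableEq R]
    {a b : ι → R} {c : R} (hsum : ∑ i, a i = ∑ i, b i) (hc : ∀ i, a i ≠ b i → a i = c * b i) :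
    ∑ i with a i ≠ b i, b i = 0 := by
  by_cases hab : a = b
  · simp [hab]
  obtain ⟨j, hj⟩ := Function.ne_iff.mp hab
  have hc_ne_one : c ≠ 1 := by
    rintro rfl
    exact hj (by simpa using hc j hj)
  have hfixed : c * ∑ i with a i ≠ b i, b i = ∑ i with a i ≠ b i, b i := by
    calc c * ∑ i with a i ≠ b i, b i
        = ∑ i with a i ≠ b i, a i := by
          rw [Finset.mul_sum]
          exact Finset.sum_congr rfl fun i hi => (hc i (Finset.mem_filter.mp hi).2).symm
      _ = ∑ i with a i ≠ b i, b i := sum_filter_ne_congr hsum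
  by_contra hne
  exact hc_ne_one (mul_right_cancel₀ hne (hfixed.trans (one_mul _).symm))

theorem sum_ite_mul_eq_sum [NonUnitalNonAssocSemiring R] {P : ι → Prop} [DecidablePred P]
    {x : ι → R} (t : R) (hx : ∑ i with ¬P i, x i = 0) :
    ∑ i, (if P i then x i else t * x i) = ∑ i, x i := by
  rw [Finset.sum_ite, ← Finset.mul_sum, hx, mul_zero, ← hx, Finset.sum_filter_add_sum_filter_not]

end Sums

theorem linearIndependent_mul_left {ι κ R : Type*} [CommRing R] [NoZeroDivisors R] {u : ι → R}
    (hu : ∀ i, u i ≠ 0) {v : κ → ι → R} (hv : LinearIndependent R v) :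
    LinearIndependent R fun k => u * v k := by
  have hinj : Function.Injective (LinearMap.mulLeft R u) := fun x y hxy =>
    funext fun i => mul_left_cancel₀ (hu i) (congrFun hxy i)
  exact hv.map' (LinearMap.mulLeft R u) (LinearMap.ker_eq_bot.mpr hinj)

/-- The stratum `W₂⁽⁰⁾`, with coefficients in a commutative ring `R` and coordinates indexed by a
finite type `ι`. -/
def zeroStratum (R ι : Type*) [CommRing R] [Fintype ι] : Set ((ι → R) × (ι → R)) :=
  {p | (∀ i, p.1 i ≠ 0) ∧ (∀ i, p.2 i ≠ 0) ∧ (∑ i, p.1 i = 1) ∧ (∑ i, p.2 i = 1) ∧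
    LinearIndependent R ![p.1, p.2] ∧ ∃ c : R, ∀ i, p.1 i ≠ p.2 i → p.1 i = c * p.2 i}

/-- The scaling operation `t · (b₁, b₂)` on pairs of vectors: it multiplies both vectors by `t` at
the coordinates where they differ. It is defined for every `t`, including `t = 0`. -/
def scaleDiffering {R ι : Type*} [Mul R] [DecidableEq R] (t : R) (p : (ι → R) × (ι → R)) :
    (ι → R) × (ι → R) :=
  (fun i => if p.1 i = p.2 i then p.1 i else t * p.1 i,
    fun i => if p.1 i = p.2 i then p.2 i else t * p.2 i)

section ScaleDiffering

variable {R ι : Type*} [CommRing R] [DecidableEq R] {t : R} {p : (ι → R) × (ι → R)}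

theorem linearIndependent_scaleDiffering [NoZeroDivisors R] (ht : t ≠ 0)
    (hp : LinearIndependent R ![p.1, p.2]) :
    LinearIndependent R ![(scaleDiffering t p).1, (scaleDiffering t p).2] := by
  have : Nontrivial R := ⟨t, 0, ht⟩
  let u : ι → R := fun i => if p.1 i = p.2 i then 1 else t
  have hu : ∀ i, u i ≠ 0 := fun i => by
    dsimp only [u]
    split_ifs
    exacts [one_ne_zero, ht]
  convert linearIndependent_mul_left hu hp using 1
  ext k i
  fin_cases k <;> simp [scaleDiffering, u]

theorem proportional_scaleDiffering {c : R} (hc : ∀ i, p.1 i ≠ p.2 i → p.1 i = c * p.2 i) (i : ι)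
    (hi : (scaleDiffering t p).1 i ≠ (scaleDiffering t p).2 i) :
    (scaleDiffering t p).1 i = c * (scaleDiffering t p).2 i := by
  by_cases h : p.1 i = p.2 i
  · exact absurd (by simp [scaleDiffering, h]) hi
  · simp only [scaleDiffering, if_neg h]
    rw [hc i h, mul_left_comm]

variable [Fintype ι]

theorem scaleDiffering_mem_zeroStratum [NoZeroDivisors R] (ht : t ≠ 0)
    (hp : p ∈ zeroStratum R ι) : scaleDiffering t p ∈ zeroStratum R ι := by
  obtain ⟨hne₁, hne₂, hsum₁, hsum₂, hli, c, hc⟩ := hp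
  have hsum : ∑ i, p.1 i = ∑ i, p.2 i := hsum₁.trans hsum₂.symm
  have hdiff₂ : ∑ i with p.1 i ≠ p.2 i, p.2 i = 0 := sum_filter_ne_eq_zero_of_proportional hsum hc
  have hdiff₁ : ∑ i with p.1 i ≠ p.2 i, p.1 i = 0 := (sum_filter_ne_congr hsum).trans hdiff₂
  have hite_ne_zero {x : ι → R} (hx : ∀ i, x i ≠ 0) (i : ι) :
      (if p.1 i = p.2 i then x i else t * x i) ≠ 0 := by
    split_ifs
    exacts [hx i, mul_ne_zero ht (hx i)]
  exact ⟨hite_ne_zero hne₁, hite_ne_zero hne₂, (sum_ite_mul_eq_sum t hdiff₁).trans hsum₁,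
    (sum_ite_mul_eq_sum t hdiff₂).trans hsum₂, linearIndependent_scaleDiffering ht hli,
    c, proportional_scaleDiffering hc⟩

theorem eq_one_of_scaleDiffering_eq_self [IsDomain R] (hp : p ∈ zeroStratum R ι)
    (hfix : scaleDiffering t p = p) : t = 1 := by
  obtain ⟨hne₁, -, -, -, hli, -⟩ := hp
  have hp_ne : p.1 ≠ p.2 := hli.injective.ne (zero_ne_one : (0 : Fin 2) ≠ 1)
  obtain ⟨j, hj⟩ := Function.ne_iff.mp hp_ne
  have hscale : t * p.1 j = p.1 j := by
    simpa only [scaleDiffering, if_neg hj] using congrFun (congrArg Prod.fst hfix) j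
  exact mul_right_cancel₀ (hne₁ j) (hscale.trans (one_mul _).symm)

theorem torus_action_on_W2_zero_stratum_general [IsDomain R] (hp : p ∈ zeroStratum R ι)
    (ht : t ≠ 0) :
    scaleDiffering t p ∈ zeroStratum R ι ∧ (scaleDiffering t p = p → t = 1) :=
  ⟨scaleDiffering_mem_zeroStratum ht hp, eq_one_of_scaleDiffering_eq_self hp⟩

end ScaleDiffering

open scoped Classical in
/-- The `ℂ*`-action on the stratum `W₂⁽⁰⁾` that rescales exactly the coordinates at
which the two vectors differ: it preserves `W₂⁽⁰⁾` and has no fixed points other than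
for `t = 1`. -/
theorem torus_action_on_W2_zero_stratum (m : ℕ) (hm : 2 ≤ m)
    (W20 : Set ((Fin m → ℂ) × (Fin m → ℂ)))
    (hW20 : W20 = {p : (Fin m → ℂ) × (Fin m → ℂ) |
      (∀ i, p.1 i ≠ 0) ∧ (∀ i, p.2 i ≠ 0) ∧
      (∑ i, p.1 i = 1) ∧ (∑ i, p.2 i = 1) ∧
      LinearIndependent ℂ ![p.1, p.2] ∧
      ∃ c : ℂ, ∀ i, p.1 i ≠ p.2 i → p.1 i = c * p.2 i})
    (b₁ b₂ : Fin m → ℂ) (hb : (b₁, b₂) ∈ W20) (t : ℂ) (ht : t ≠ 0)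
    (b₁' b₂' : Fin m → ℂ)
    (hb₁' : b₁' = fun i => if b₁ i = b₂ i then b₁ i else t * b₁ i)
    (hb₂' : b₂' = fun i => if b₁ i = b₂ i then b₂ i else t * b₂ i) :
    (b₁', b₂') ∈ W20 ∧ ((b₁', b₂') = (b₁, b₂) → t = 1) := by
  subst hW20 hb₁' hb₂'
  exact torus_action_on_W2_zero_stratum_general hb ht
end

section
/- Let m ≥ 2 and let r₁, …, r_m ∈ ℂ be pairwise distinct complex numbers with rᵢ ∉ {0, 1} for every i. Then: (i) there exists b ∈ ℂ^m with all entries nonzero such that Σᵢ bᵢ = 1 and Σᵢ rᵢ·bᵢ = 1; (ii) for every such b, the pair of vectors ((rᵢ·bᵢ)ᵢ, (bᵢ)ᵢ) lies in W₂^{(m−1)}; and (iii) the map b ↦ ((rᵢ·bᵢ)ᵢ, (bᵢ)ᵢ) is a bijection from {b ∈ ℂ^m : all bᵢ ≠ 0, Σᵢ bᵢ = 1, Σᵢ rᵢ·bᵢ = 1} onto the set of pairs (b₁, b₂) ∈ W₂^{(m−1)} with b₁ᵢ/b₂ᵢ = rᵢ for all i. Consequently, the ratio map (b₁, b₂) ↦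 (b₁ᵢ/b₂ᵢ)ᵢ from W₂^{(m−1)} onto {r ∈ ℂ^m : the rᵢ are pairwise distinct and every rᵢ ∉ {0,1}} is surjective. -/
/-!
Recovering `b₁ = r b₂` from the ratios identifies the fiber over `r` with the set of nowhere
vanishing `b` satisfying `∑ bᵢ = 1` and `∑ rᵢ bᵢ = 1`. For nonemptiness put `cᵢ = (rᵢ - 1) bᵢ`: up
to scaling, one needs a nowhere vanishing `c` with `∑ cᵢ = 0` and `∑ cᵢ / (rᵢ - 1) ≠ 0`. Take all
entries equal to `1` except two, where a parameter `x` moves mass from one entry to the other. Only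
three values of `x` are bad, and the field has at least the four elements `0`, `1`, `rᵢ`, `rⱼ`.
-/

section Fiber

variable {ι K : Type*} [Field K]

/-- The pair with second vector `b` and ratios `r` (wherever `b` is nonzero), which embeds the
weights `b` into the fiber of the ratio map over `r`. -/
def scaledPair (r b : ι → K) : (ι → K) × (ι → K) :=
  (fun i => r i * b i, b)

theorem scaledPair_fst_div_snd (r : ι → K) {b : ι → K} (hb : ∀ i, b i ≠ 0) (i : ι) :
    (scaledPair r b).1 i / (scaledPair r b).2 i = r i :=
  mul_div_cancel_right₀ _ (hb i)

theorem scaledPair_snd_of_ratio_eq {r : ι → K} {p : (ι → K) × (ι → K)} (hp : ∀ i, p.2 i ≠ 0)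
    (hratio : ∀ i, p.1 i / p.2 i = r i) : scaledPair r p.2 = p :=
  Prod.ext (funext fun i => ((div_eq_iff (hp i)).mp (hratio i)).symm) rfl

variable [Fintype ι]

variable (ι K) in
/-- The stratum `W₂^{(m-1)}` over a field `K`, with a finite index type `ι` in place of
`{1, …, m}`. -/
def topStratum : Set ((ι → K) × (ι → K)) :=
  {p | (∀ i, p.1 i ≠ 0) ∧ (∀ i, p.2 i ≠ 0) ∧ (∑ i, p.1 i = 1) ∧ (∑ i, p.2 i = 1) ∧
    Function.Injective (fun i => p.1 i / p.2 i) ∧ ∀ i, p.1 i / p.2 i ≠ 1}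

/-- The nowhere vanishing weights of total mass `1` for which `r` has weighted mean `1`; they
parametrize the fiber of the ratio map over `r`. -/
def normalizedWeights (r : ι → K) : Set (ι → K) :=
  {b | (∀ i, b i ≠ 0) ∧ (∑ i, b i = 1) ∧ ∑ i, r i * b i = 1}

theorem exists_forall_ne_zero_sum_eq_zero_sum_mul_ne_zero {t : ι → K} {i j : ι} (hij : t i ≠ t j)
    {A : Finset K} (hA : 3 < A.card) :
    ∃ c : ι → K, (∀ k, c k ≠ 0) ∧ ∑ k, c k = 0 ∧ ∑ k, t k * c k ≠ 0 := by
  classical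
  have hne : i ≠ j := fun h => hij (congrArg t h)
  have hsub : t i - t j ≠ 0 := sub_ne_zero.mpr hij
  let N : K := Fintype.card ι
  obtain ⟨x, -, hx⟩ : ∃ x ∈ A, x ∉ ({-1, 1 - N, (t j * N - ∑ k, t k) / (t i - t j)} : Finset K) :=
    Finset.exists_mem_notMem_of_card_lt_card (Finset.card_le_three.trans_lt hA)
  simp only [Finset.mem_insert, Finset.mem_singleton, not_or, eq_div_iff hsub] at hx
  obtain ⟨hxi, hxj, hxt⟩ := hx
  refine ⟨1 + Pi.single i x - Pi.single j (x + N), fun k hk => ?_, ?_, fun h => ?_⟩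
  · rcases eq_or_ne k i with rfl | hki
    · simp only [Pi.sub_apply, Pi.add_apply, Pi.one_apply, Pi.single_eq_same,
        Pi.single_eq_of_ne hne] at hk
      exact hxi (by linear_combination hk)
    · rcases eq_or_ne k j with rfl | hkj
      · simp only [Pi.sub_apply, Pi.add_apply, Pi.one_apply, Pi.single_eq_same,
          Pi.single_eq_of_ne hki] at hk
        exact hxj (by linear_combination -hk)
      · simp [hki, hkj] at hk
  · simp [Finset.sum_add_distrib, Finset.sum_sub_distrib, N, add_comm x]
  · have hsum : ∑ k, t k + t i * x - t j * (x + N) = 0 := by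
      simpa [mul_sub, mul_add, Finset.sum_add_distrib, Finset.sum_sub_distrib,
        Pi.single_apply] using h
    exact hxt (by linear_combination hsum)

theorem normalizedWeights_nonempty {r : ι → K} (hr1 : ∀ k, r k ≠ 1) {i j : ι} (hij : r i ≠ r j)
    {A : Finset K} (hA : 3 < A.card) : (normalizedWeights r).Nonempty := by
  have hsub (k : ι) : r k - 1 ≠ 0 := sub_ne_zero.mpr (hr1 k)
  have hinv : (r i - 1)⁻¹ ≠ (r j - 1)⁻¹ := fun h => hij (sub_left_injective (inv_injective h))
  obtain ⟨c, hc0, hcsum, hσ⟩ :=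
    exists_forall_ne_zero_sum_eq_zero_sum_mul_ne_zero (t := fun k => (r k - 1)⁻¹) hinv hA
  set σ := ∑ k, (r k - 1)⁻¹ * c k
  let b : ι → K := fun k => (r k - 1)⁻¹ * c k / σ
  have hbsum : ∑ k, b k = 1 := by
    rw [← Finset.sum_div, div_self hσ]
  refine ⟨b, fun k => div_ne_zero (mul_ne_zero (inv_ne_zero (hsub k)) (hc0 k)) hσ, hbsum, ?_⟩
  calc ∑ k, r k * b k = ∑ k, (b k + c k / σ) := by
        refine Finset.sum_congr rfl fun k _ => ?_
        have := hsub k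
        simp only [b]
        field_simp
        ring
    _ = 1 := by rw [Finset.sum_add_distrib, hbsum, ← Finset.sum_div, hcsum, zero_div, add_zero]

theorem scaledPair_mem_topStratum {r b : ι → K} (hr_inj : Function.Injective r)
    (hr0 : ∀ i, r i ≠ 0) (hr1 : ∀ i, r i ≠ 1) (hb : b ∈ normalizedWeights r) :
    scaledPair r b ∈ topStratum ι K := by
  obtain ⟨hb0, hbsum, hrbsum⟩ := hb
  have hratio := scaledPair_fst_div_snd r hb0
  refine ⟨fun i => mul_ne_zero (hr0 i) (hb0 i), hb0, hrbsum, hbsum, ?_, fun i => ?_⟩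
  · rwa [funext hratio]
  · rw [hratio]
    exact hr1 i

theorem bijOn_scaledPair {r : ι → K} (hr_inj : Function.Injective r)
    (hr0 : ∀ i, r i ≠ 0) (hr1 : ∀ i, r i ≠ 1) :
    Set.BijOn (scaledPair r) (normalizedWeights r)
      {p ∈ topStratum ι K | ∀ i, p.1 i / p.2 i = r i} := by
  refine ⟨fun b hb => ⟨scaledPair_mem_topStratum hr_inj hr0 hr1 hb,
    scaledPair_fst_div_snd r hb.1⟩, fun b _ b' _ h => congrArg Prod.snd h, ?_⟩
  rintro p ⟨⟨-, hp0, hsum₁, hsum₂, -, -⟩, hratio⟩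
  have hp : scaledPair r p.2 = p := scaledPair_snd_of_ratio_eq hp0 hratio
  refine ⟨p.2, ⟨hp0, hsum₂, ?_⟩, hp⟩
  rwa [← hp] at hsum₁

theorem W2_top_stratum_fiber_bundle_general [Nontrivial ι] {r : ι → K}
    (hr_inj : Function.Injective r) (hr0 : ∀ i, r i ≠ 0) (hr1 : ∀ i, r i ≠ 1) :
    (normalizedWeights r).Nonempty ∧
    (∀ b ∈ normalizedWeights r, scaledPair r b ∈ topStratum ι K) ∧
    Set.BijOn (scaledPair r) (normalizedWeights r)
      {p ∈ topStratum ι K | ∀ i, p.1 i / p.2 i = r i} ∧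
    (∃ p ∈ topStratum ι K, ∀ i, p.1 i / p.2 i = r i) := by
  classical
  obtain ⟨i, j, hij⟩ := exists_pair_ne ι
  have hrij : r i ≠ r j := hr_inj.ne hij
  have hcard : 3 < ({0, 1, r i, r j} : Finset K).card := by
    simp [Finset.card_insert_of_notMem, hrij, (hr0 _).symm, (hr1 _).symm]
  have hne : (normalizedWeights r).Nonempty := normalizedWeights_nonempty hr1 hrij hcard
  have hbij := bijOn_scaledPair hr_inj hr0 hr1
  exact ⟨hne, fun b hb => (hbij.mapsTo hb).1, hbij, hbij.mapsTo.nonempty hne⟩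

end Fiber

/-- Fiber-bundle description of `W₂⁽ᵐ⁻¹⁾` over the configuration space `B_m`: for
pairwise distinct `r₁, …, r_m ∉ {0,1}`, the fiber of the ratio map over `r` is the
(nonempty) set `{b : all bᵢ ≠ 0, Σ bᵢ = 1, Σ rᵢ bᵢ = 1}` via `b ↦ ((rᵢ bᵢ)ᵢ, b)`;
in particular the ratio map `W₂⁽ᵐ⁻¹⁾ → B_m` is surjective. -/
theorem W2_top_stratum_fiber_bundle (m : ℕ) (hm : 2 ≤ m) (r : Fin m → ℂ)
    (hr_inj : Function.Injective r) (hr0 : ∀ i, r i ≠ 0) (hr1 : ∀ i, r i ≠ 1)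
    (W2top : Set ((Fin m → ℂ) × (Fin m → ℂ)))
    (hW2top : W2top = {p : (Fin m → ℂ) × (Fin m → ℂ) |
      (∀ i, p.1 i ≠ 0) ∧ (∀ i, p.2 i ≠ 0) ∧
      (∑ i, p.1 i = 1) ∧ (∑ i, p.2 i = 1) ∧
      Function.Injective (fun i => p.1 i / p.2 i) ∧
      ∀ i, p.1 i / p.2 i ≠ 1})
    (B : Set (Fin m → ℂ))
    (hB : B = {b : Fin m → ℂ | (∀ i, b i ≠ 0) ∧
      (∑ i, b i = 1) ∧ ∑ i, r i * b i = 1}) :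
    B.Nonempty ∧
    (∀ b ∈ B, ((fun i => r i * b i, b) : (Fin m → ℂ) × (Fin m → ℂ)) ∈ W2top) ∧
    Set.BijOn (fun b : Fin m → ℂ => ((fun i => r i * b i, b) : (Fin m → ℂ) × (Fin m → ℂ)))
      B {p ∈ W2top | ∀ i, p.1 i / p.2 i = r i} ∧
    (∃ p ∈ W2top, ∀ i, p.1 i / p.2 i = r i) := by
  subst hW2top hB
  have : Nontrivial (Fin m) := Fin.nontrivial_iff_two_le.mpr hm
  exact W2_top_stratum_fiber_bundle_general hr_inj hr0 hr1
end

section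
/- Let u₀, u₁, u₂, u₃ ∈ ℂ satisfy (u₀+u₁)(u₀+u₂)(u₁+u₃)(u₂+u₃)(u₀+u₁+u₂+u₃) ≠ 0, and set u_s = −(u₀+u₁+u₂+u₃). Define p₀ = (u₀+u₁)(u₀+u₂), p₁ = (u₀+u₁)(u₁+u₃), p₂ = (u₂+u₃)(u₀+u₂), p₃ = (u₂+u₃)(u₁+u₃), and p_s = (u₀+u₁+u₂+u₃)². Then: (i) all of p₀, p₁, p₂, p₃, p_s are nonzero; (ii) p₀·p₃ = p₁·p₂; (iii) p₀ + p₁ + p₂ + p₃ = p_s; and (iv) there exist λ, μ ∈ ℂ such that the vector (u₀/p₀, u₁/p₁, u₂/p₂, u₃/p₃, u_s/p_s) equals λ·(p₃, −p₂, −p₁, p₀, 0) + μ·(1, 1, 1, 1, −1). -/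
/-!
Let `n` be the total and `D = u₀u₃ - u₁u₂` the determinant of the `2 × 2` table `u`. Each `pᵢ` is
the product of the row sum and the column sum through `uᵢ`, and it misses `n * uᵢ` only by the
determinant: `n * uᵢ = pᵢ ± D`, with sign `+` for `i = 0, 3` and `-` for `i = 1, 2`. Dividing by
`n * pᵢ` and using `p₀p₃ = p₁p₂` to bring the four correction terms `± D / (n * pᵢ)` to a common
denominator gives the multipliers `λ = D / (n * p₀p₃)` and `μ = 1 / n`.
-/

theorem sum_mul_cell_eq_row_sum_mul_col_sum_add_det {R : Type*} [CommRing R] (a b c d : R) :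
    (a + b + c + d) * a = (a + b) * (a + c) + (a * d - b * c) := by
  ring

section Field

variable {K : Type*} [Field K]

theorem eq_multiplier_mul_of_mul_eq_add {n p q x δ : K} (hn : n ≠ 0) (hp : p ≠ 0) (hq : q ≠ 0)
    (h : n * x = p + δ) : x = (δ / (n * (p * q)) * q + 1 / n) * p :=
  calc
    x = (p + δ) / n := eq_div_of_mul_eq hn (by rw [mul_comm, h])
    _ = (δ / (n * (p * q)) * q + 1 / n) * p := by field_simp; ring

theorem scaled_gradient_eq_smul_add_smul_iff {u₀ u₁ u₂ u₃ us p₀ p₁ p₂ p₃ ps lam mu : K}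
    (hp₀ : p₀ ≠ 0) (hp₁ : p₁ ≠ 0) (hp₂ : p₂ ≠ 0) (hp₃ : p₃ ≠ 0) (hps : ps ≠ 0) :
    (![u₀ / p₀, u₁ / p₁, u₂ / p₂, u₃ / p₃, us / ps] : Fin 5 → K) =
        lam • ![p₃, -p₂, -p₁, p₀, 0] + mu • ![1, 1, 1, 1, -1] ↔
      u₀ = (lam * p₃ + mu) * p₀ ∧ u₁ = (-lam * p₂ + mu) * p₁ ∧ u₂ = (-lam * p₁ + mu) * p₂ ∧
        u₃ = (lam * p₀ + mu) * p₃ ∧ us = -mu * ps := by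
  simp [funext_iff, Fin.forall_fin_succ, div_eq_iff, hp₀, hp₁, hp₂, hp₃, hps]

theorem scaled_gradient_eq_of_mul_eq_add_sub {u₀ u₁ u₂ u₃ us p₀ p₁ p₂ p₃ ps n δ : K}
    (hn : n ≠ 0) (hp₀ : p₀ ≠ 0) (hp₁ : p₁ ≠ 0) (hp₂ : p₂ ≠ 0) (hp₃ : p₃ ≠ 0) (hps : ps ≠ 0)
    (quadric : p₀ * p₃ = p₁ * p₂) (h₀ : n * u₀ = p₀ + δ) (h₁ : n * u₁ = p₁ - δ)
    (h₂ : n * u₂ = p₂ - δ) (h₃ : n * u₃ = p₃ + δ) (hs : n * us = -ps) :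
    (![u₀ / p₀, u₁ / p₁, u₂ / p₂, u₃ / p₃, us / ps] : Fin 5 → K) =
      (δ / (n * (p₀ * p₃))) • ![p₃, -p₂, -p₁, p₀, 0] + (1 / n) • ![1, 1, 1, 1, -1] := by
  rw [sub_eq_add_neg] at h₁ h₂
  refine (scaled_gradient_eq_smul_add_smul_iff hp₀ hp₁ hp₂ hp₃ hps).2 ⟨?_, ?_, ?_, ?_, ?_⟩
  · exact eq_multiplier_mul_of_mul_eq_add hn hp₀ hp₃ h₀
  · rw [quadric, ← neg_div]
    exact eq_multiplier_mul_of_mul_eq_add hn hp₁ hp₂ h₁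
  · rw [quadric, mul_comm p₁, ← neg_div]
    exact eq_multiplier_mul_of_mul_eq_add hn hp₂ hp₁ h₂
  · rw [mul_comm p₀]
    exact eq_multiplier_mul_of_mul_eq_add hn hp₃ hp₀ h₃
  · rw [eq_div_of_mul_eq hn ((mul_comm us n).trans hs)]
    ring

theorem critical_point_2x2_independence_general (u₀ u₁ u₂ u₃ : K)
    (hu : (u₀ + u₁) * (u₀ + u₂) * (u₁ + u₃) * (u₂ + u₃) * (u₀ + u₁ + u₂ + u₃) ≠ 0)
    (us p₀ p₁ p₂ p₃ ps : K)
    (hus : us = -(u₀ + u₁ + u₂ + u₃))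
    (hp₀ : p₀ = (u₀ + u₁) * (u₀ + u₂))
    (hp₁ : p₁ = (u₀ + u₁) * (u₁ + u₃))
    (hp₂ : p₂ = (u₂ + u₃) * (u₀ + u₂))
    (hp₃ : p₃ = (u₂ + u₃) * (u₁ + u₃))
    (hps : ps = (u₀ + u₁ + u₂ + u₃) ^ 2) :
    (p₀ ≠ 0 ∧ p₁ ≠ 0 ∧ p₂ ≠ 0 ∧ p₃ ≠ 0 ∧ ps ≠ 0) ∧
    p₀ * p₃ = p₁ * p₂ ∧
    p₀ + p₁ + p₂ + p₃ = ps ∧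
    ∃ lam mu : K,
      (![u₀ / p₀, u₁ / p₁, u₂ / p₂, u₃ / p₃, us / ps] : Fin 5 → K) =
        lam • ![p₃, -p₂, -p₁, p₀, 0] + mu • ![1, 1, 1, 1, -1] := by
  simp only [mul_ne_zero_iff] at hu
  obtain ⟨⟨⟨⟨row₀_ne, col₀_ne⟩, col₁_ne⟩, row₁_ne⟩, total_ne⟩ := hu
  have hp₀_ne : p₀ ≠ 0 := hp₀ ▸ mul_ne_zero row₀_ne col₀_ne
  have hp₁_ne : p₁ ≠ 0 := hp₁ ▸ mul_ne_zero row₀_ne col₁_ne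
  have hp₂_ne : p₂ ≠ 0 := hp₂ ▸ mul_ne_zero row₁_ne col₀_ne
  have hp₃_ne : p₃ ≠ 0 := hp₃ ▸ mul_ne_zero row₁_ne col₁_ne
  have hps_ne : ps ≠ 0 := hps ▸ pow_ne_zero 2 total_ne
  have quadric : p₀ * p₃ = p₁ * p₂ := by rw [hp₀, hp₁, hp₂, hp₃]; ring
  have hyperplane : p₀ + p₁ + p₂ + p₃ = ps := by rw [hp₀, hp₁, hp₂, hp₃, hps]; ring
  refine ⟨⟨hp₀_ne, hp₁_ne, hp₂_ne, hp₃_ne, hps_ne⟩, quadric, hyperplane, _, _,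
    scaled_gradient_eq_of_mul_eq_add_sub (δ := u₀ * u₃ - u₁ * u₂) total_ne
      hp₀_ne hp₁_ne hp₂_ne hp₃_ne hps_ne quadric ?_ ?_ ?_ ?_ ?_⟩
  · linear_combination sum_mul_cell_eq_row_sum_mul_col_sum_add_det u₀ u₁ u₂ u₃ - hp₀
  · linear_combination sum_mul_cell_eq_row_sum_mul_col_sum_add_det u₁ u₀ u₃ u₂ - hp₁
  · linear_combination sum_mul_cell_eq_row_sum_mul_col_sum_add_det u₂ u₃ u₀ u₁ - hp₂
  · linear_combination sum_mul_cell_eq_row_sum_mul_col_sum_add_det u₃ u₂ u₁ u₀ - hp₃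
  · rw [hus, hps]
    ring

end Field

/-- The explicit critical point of the likelihood function on the `2 × 2` independence
model: the point `p` defined below has nonzero coordinates, lies on the variety
`p₀p₃ = p₁p₂`, `p₀+p₁+p₂+p₃ = p_s`, and the scaled gradient `(u₀/p₀, …, u_s/p_s)` lies
in the row span of the Jacobian of the defining equations. -/
theorem critical_point_2x2_independence (u₀ u₁ u₂ u₃ : ℂ)
    (hu : (u₀ + u₁) * (u₀ + u₂) * (u₁ + u₃) * (u₂ + u₃) * (u₀ + u₁ + u₂ + u₃) ≠ 0)
    (us p₀ p₁ p₂ p₃ ps : ℂ)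
    (hus : us = -(u₀ + u₁ + u₂ + u₃))
    (hp₀ : p₀ = (u₀ + u₁) * (u₀ + u₂))
    (hp₁ : p₁ = (u₀ + u₁) * (u₁ + u₃))
    (hp₂ : p₂ = (u₂ + u₃) * (u₀ + u₂))
    (hp₃ : p₃ = (u₂ + u₃) * (u₁ + u₃))
    (hps : ps = (u₀ + u₁ + u₂ + u₃) ^ 2) :
    (p₀ ≠ 0 ∧ p₁ ≠ 0 ∧ p₂ ≠ 0 ∧ p₃ ≠ 0 ∧ ps ≠ 0) ∧
    p₀ * p₃ = p₁ * p₂ ∧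
    p₀ + p₁ + p₂ + p₃ = ps ∧
    ∃ lam mu : ℂ,
      (![u₀ / p₀, u₁ / p₁, u₂ / p₂, u₃ / p₃, us / ps] : Fin 5 → ℂ) =
        lam • ![p₃, -p₂, -p₁, p₀, 0] + mu • ![1, 1, 1, 1, -1] :=
  critical_point_2x2_independence_general u₀ u₁ u₂ u₃ hu us p₀ p₁ p₂ p₃ ps
    hus hp₀ hp₁ hp₂ hp₃ hps
end
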